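/- Let D > 0, let F : [0, D) → ℝ be C³ with F(0) = 0, F'(0) = 0, and F'(t), F''(t), F'''(t), and (F(t)/t)' all nonnegative on (0, D), and let r : ℂ² → ℝ be convex and Fréchet-differentiable. Define ρ(z) = F(x₁²) + r(z) for z = (z₁,z₂) with z₁ = x₁ + i y₁ and x₁² < D, and fix d with d² < D. Write ζ₁ = ξ₁ + i η₁ and z₁ = x₁ + i y₁. Then for each k ∈ {1, 2} there is a constant c > 0 such that: for all ζ, z ∈ ℂ² with |ξ₁| ≤ d, |x₁| ≤ d, ρ(ζ) − ρ(z) ≥ 0, and |ξ₁| ≥ |x₁ − ξ₁|, one has |Φ(ζ,z)|^k · |z − ζ| ≥ c·( |Im Φ(ζ,z)| + ρ(ζ) − ρ(z) + F(|x₁ − ξ₁|²) )^k · ( |x₁ − ξ₁| + |y₁ − η₁| ). -/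

import Mathlib

open Complex Set

/-- The Wirtinger derivative `∂g/∂z₁` of a real-valued function `g` on `ℂ²`. -/
noncomputable def wirt1 (g : ℂ × ℂ → ℝ) (ζ : ℂ × ℂ) : ℂ :=
  (1 / 2 : ℂ) * (((fderiv ℝ g ζ) (1, 0) : ℝ) - Complex.I * ((fderiv ℝ g ζ) (Complex.I, 0) : ℝ))

/-- The Wirtinger derivative `∂g/∂z₂`. -/
noncomputable def wirt2 (g : ℂ × ℂ → ℝ) (ζ : ℂ × ℂ) : ℂ :=
  (1 / 2 : ℂ) * (((fderiv ℝ g ζ) (0, 1) : ℝ) - Complex.I * ((fderiv ℝ g ζ) (0, Complex.I) : ℝ))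

/-- The support function `Φ(ζ,z) = Σ_{j=1}^{2} (∂g/∂ζ_j)(ζ)·(ζ_j − z_j)`. -/
noncomputable def suppFn (g : ℂ × ℂ → ℝ) (ζ z : ℂ × ℂ) : ℂ :=
  wirt1 g ζ * (ζ.1 - z.1) + wirt2 g ζ * (ζ.2 - z.2)

/-- The Euclidean norm on `ℂ²`. -/
noncomputable def eNorm (w : ℂ × ℂ) : ℝ :=
  Real.sqrt (‖w.1‖ ^ 2 + ‖w.2‖ ^ 2)

/-- Tangent line inequality for a convex function of one real variable. -/
lemma tangent_ineq {S : Set ℝ} {f : ℝ → ℝ} {f' a b : ℝ} (hc : ConvexOn ℝ S f) (ha : a ∈ S)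
    (hb : b ∈ S) (h : HasDerivWithinAt f f' S a) : f a + f' * (b - a) ≤ f b := by
  rcases lt_trichotomy a b with hab | hab | hab
  · have h1 := hc.le_slope_of_hasDerivWithinAt ha hb hab h
    rw [slope_def_field, le_div_iff₀ (by linarith)] at h1
    linarith
  · subst hab; simp
  · have h1 := hc.slope_le_of_hasDerivWithinAt hb ha hab h
    rw [slope_def_field, div_le_iff₀ (by linarith)] at h1
    linarith

/-- Gradient inequality for a convex differentiable function. -/
lemma grad_ineq {r : ℂ × ℂ → ℝ} (hconv : ConvexOn ℝ Set.univ r) (hdiff : Differentiable ℝ r)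
    (ζ z : ℂ × ℂ) : r ζ - r z ≤ fderiv ℝ r ζ (ζ - z) := by
  have hc : ConvexOn ℝ Set.univ (r ∘ (AffineMap.lineMap ζ z : ℝ →ᵃ[ℝ] ℂ × ℂ)) := by
    simpa using hconv.comp_affineMap (AffineMap.lineMap ζ z : ℝ →ᵃ[ℝ] ℂ × ℂ)
  have hl : HasDerivAt (AffineMap.lineMap ζ z : ℝ → ℂ × ℂ) (z - ζ) 0 :=
    AffineMap.hasDerivAt_lineMap
  have hr : HasFDerivAt r (fderiv ℝ r ζ) ((AffineMap.lineMap ζ z : ℝ → ℂ × ℂ) 0) := by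
    simpa using (hdiff ζ).hasFDerivAt
  have hd := hr.comp_hasDerivAt (0 : ℝ) hl
  have := tangent_ineq hc (mem_univ 0) (mem_univ 1) hd.hasDerivWithinAt
  have e : fderiv ℝ r ζ (ζ - z) = - fderiv ℝ r ζ (z - ζ) := by
    rw [← map_neg, neg_sub]
  simp at this
  rw [e]
  simp
  linarith

/-- The real part of the support function. -/
lemma suppFn_re (g : ℂ × ℂ → ℝ) (ζ z : ℂ × ℂ) :
    2 * (suppFn g ζ z).re = fderiv ℝ g ζ (ζ - z) := by
  have e : ζ - z = (ζ - z).1.re • ((1 : ℂ), (0 : ℂ)) + (ζ - z).1.im • (Complex.I, (0 : ℂ))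
      + (ζ - z).2.re • ((0 : ℂ), (1 : ℂ)) + (ζ - z).2.im • ((0 : ℂ), Complex.I) := by
    ext <;> simp [Complex.ext_iff]
  rw [e]
  simp only [map_add, map_smul, smul_eq_mul]
  simp [suppFn, wirt1, wirt2]
  ring

/-- Lemma 2.3, first case: lower bound for the support function of
`ρ(z) = F(x₁²) + r(z)` (real case) when `|ξ₁| ≥ |x₁ − ξ₁|`. -/
theorem stmt7 (D : ℝ) (hD : 0 < D) (F F' F'' F''' : ℝ → ℝ)
    (hF : ContDiffOn ℝ 3 F (Set.Ico 0 D))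
    (hF' : ∀ t ∈ Set.Ico 0 D, HasDerivWithinAt F (F' t) (Set.Ico 0 D) t)
    (hF'' : ∀ t ∈ Set.Ico 0 D, HasDerivWithinAt F' (F'' t) (Set.Ico 0 D) t)
    (hF''' : ∀ t ∈ Set.Ico 0 D, HasDerivWithinAt F'' (F''' t) (Set.Ico 0 D) t)
    (hF0 : F 0 = 0) (hF'0 : F' 0 = 0)
    (hF'pos : ∀ t ∈ Set.Ioo 0 D, 0 ≤ F' t)
    (hF''pos : ∀ t ∈ Set.Ioo 0 D, 0 ≤ F'' t)
    (hF'''pos : ∀ t ∈ Set.Ioo 0 D, 0 ≤ F''' t)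
    (hquot : ∀ t ∈ Set.Ioo 0 D, 0 ≤ deriv (fun s => F s / s) t)
    (r : ℂ × ℂ → ℝ) (hconv : ConvexOn ℝ Set.univ r) (hdiff : Differentiable ℝ r)
    (ρ : ℂ × ℂ → ℝ)
    (hρ : ∀ z : ℂ × ℂ, (z.1.re) ^ 2 < D → ρ z = F ((z.1.re) ^ 2) + r z)
    (d : ℝ) (hd : d ^ 2 < D) (k : ℕ) (hk : k = 1 ∨ k = 2) :
    ∃ c > (0 : ℝ), ∀ ζ z : ℂ × ℂ,
      |ζ.1.re| ≤ d → |z.1.re| ≤ d → 0 ≤ ρ ζ - ρ z →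
      |z.1.re - ζ.1.re| ≤ |ζ.1.re| →
      ‖suppFn ρ ζ z‖ ^ k * eNorm (z - ζ) ≥
        c * (|(suppFn ρ ζ z).im| + ρ ζ - ρ z + F (|z.1.re - ζ.1.re| ^ 2)) ^ k *
          (|z.1.re - ζ.1.re| + |z.1.im - ζ.1.im|) := by
  have hinterior : interior (Set.Ico 0 D) = Set.Ioo 0 D := interior_Ico
  have hFc : ConvexOn ℝ (Set.Ico 0 D) F := by
    refine convexOn_of_hasDerivWithinAt2_nonneg (f' := F') (f'' := F'') (convex_Ico 0 D)
      hF.continuousOn ?_ ?_ ?_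
    · intro x hx
      exact (hF' x (interior_subset hx)).mono interior_subset
    · intro x hx
      exact (hF'' x (interior_subset hx)).mono interior_subset
    · rw [hinterior]; exact hF''pos
  have key : ∀ a ∈ Set.Ico 0 D, ∀ b ∈ Set.Ico 0 D, F a + F' a * (b - a) ≤ F b :=
    fun a ha b hb => tangent_ineq hFc ha hb (hF' a ha)
  have hmono : ∀ a ∈ Set.Ico 0 D, ∀ b ∈ Set.Ico 0 D, a ≤ b → F' a ≤ F' b := by
    intro a ha b hb hab
    rcases hab.eq_or_lt with rfl | hab
    · exact le_rfl
    · have h1 := key a ha b hb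
      have h2 := key b hb a ha
      by_contra hcon
      push Not at hcon
      nlinarith [mul_pos (sub_pos.2 hab) (sub_pos.2 hcon)]
  refine ⟨1 / 18, by norm_num, ?_⟩
  intro ζ z hζ hz hpos hle
  have hξD : ζ.1.re ^ 2 < D := lt_of_le_of_lt (sq_le_sq' (abs_le.1 hζ).1 (abs_le.1 hζ).2) hd
  have hxD : z.1.re ^ 2 < D := lt_of_le_of_lt (sq_le_sq' (abs_le.1 hz).1 (abs_le.1 hz).2) hd
  have hhξ : (z.1.re - ζ.1.re) ^ 2 ≤ ζ.1.re ^ 2 := sq_le_sq.2 hle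
  have hfd : fderiv ℝ ρ ζ (ζ - z) =
      F' (ζ.1.re ^ 2) * (2 * ζ.1.re) * (ζ.1.re - z.1.re) + fderiv ℝ r ζ (ζ - z) := by
    let L : ℂ × ℂ →L[ℝ] ℝ := Complex.reCLM.comp (ContinuousLinearMap.fst ℝ ℂ ℂ)
    have hopen : IsOpen {s : ℝ | s ^ 2 < D} := isOpen_lt (by fun_prop) continuous_const
    have h1 : HasDerivAt (fun s : ℝ => F (s ^ 2)) (F' (ζ.1.re ^ 2) * (2 * ζ.1.re)) ζ.1.re := by
      have hsq : HasDerivWithinAt (fun s : ℝ => s ^ 2) (2 * ζ.1.re) {s : ℝ | s ^ 2 < D}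
          ζ.1.re := by
        simpa using (hasDerivAt_pow 2 ζ.1.re).hasDerivWithinAt
      have := HasDerivWithinAt.comp (h := fun s : ℝ => s ^ 2) ζ.1.re (hF' (ζ.1.re ^ 2) ⟨sq_nonneg _, hξD⟩) hsq
        (fun s hs => ⟨sq_nonneg s, hs⟩)
      exact this.hasDerivAt (hopen.mem_nhds hξD)
    have h2 : HasFDerivAt (fun w : ℂ × ℂ => F (w.1.re ^ 2) + r w)
        ((F' (ζ.1.re ^ 2) * (2 * ζ.1.re)) • L + fderiv ℝ r ζ) ζ :=
      (HasDerivAt.comp_hasFDerivAt (f := L) ζ h1 L.hasFDerivAt).add (hdiff ζ).hasFDerivAt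
    have h3 : ρ =ᶠ[nhds ζ] (fun w : ℂ × ℂ => F (w.1.re ^ 2) + r w) := by
      have : {w : ℂ × ℂ | w.1.re ^ 2 < D} ∈ nhds ζ :=
        (isOpen_lt (by fun_prop) continuous_const).mem_nhds hξD
      filter_upwards [this] with w hw using hρ w hw
    rw [(h2.congr_of_eventuallyEq h3).fderiv]
    simp [L]
  have hg := grad_ineq hconv hdiff ζ z
  have hre := suppFn_re ρ ζ z
  have hFF : F ((z.1.re - ζ.1.re) ^ 2) ≤
      F (z.1.re ^ 2) - F (ζ.1.re ^ 2) - F' (ζ.1.re ^ 2) * (2 * ζ.1.re) * (z.1.re - ζ.1.re) := by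
    have m1 : ζ.1.re ^ 2 ∈ Set.Ico 0 D := ⟨sq_nonneg _, hξD⟩
    have m2 : z.1.re ^ 2 ∈ Set.Ico 0 D := ⟨sq_nonneg _, hxD⟩
    have m3 : (z.1.re - ζ.1.re) ^ 2 ∈ Set.Ico 0 D := ⟨sq_nonneg _, hhξ.trans_lt hξD⟩
    have k1 := key _ m1 _ m2
    have k2 := key _ m3 0 ⟨le_rfl, hD⟩
    have k3 := mul_le_mul_of_nonneg_right (hmono _ m3 _ m1 hhξ) (sq_nonneg (z.1.re - ζ.1.re))
    rw [hF0] at k2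
    linarith
  have hFnn : 0 ≤ F ((z.1.re - ζ.1.re) ^ 2) := by
    have := key 0 ⟨le_rfl, hD⟩ ((z.1.re - ζ.1.re) ^ 2) ⟨sq_nonneg _, hhξ.trans_lt hξD⟩
    rw [hF0, hF'0] at this
    linarith
  have hmain : ρ ζ - ρ z + F ((z.1.re - ζ.1.re) ^ 2) ≤ 2 * (suppFn ρ ζ z).re := by
    rw [hre, hfd, hρ ζ hξD, hρ z hxD]
    linarith
  rw [sq_abs]
  set N := ‖suppFn ρ ζ z‖ with hN
  set B := |(suppFn ρ ζ z).im| + ρ ζ - ρ z + F ((z.1.re - ζ.1.re) ^ 2) with hB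
  set M := |z.1.re - ζ.1.re| + |z.1.im - ζ.1.im| with hM
  have hN0 : 0 ≤ N := norm_nonneg _
  have hB0 : 0 ≤ B := by have := abs_nonneg (suppFn ρ ζ z).im; linarith
  have hM0 : 0 ≤ M := by positivity
  have hBN : B ≤ 3 * N := by
    have h1 := Complex.abs_im_le_norm (suppFn ρ ζ z)
    have h2 := Complex.re_le_norm (suppFn ρ ζ z)
    linarith
  have hE0 : 0 ≤ eNorm (z - ζ) := Real.sqrt_nonneg _
  have hME : M ≤ 2 * eNorm (z - ζ) := by
    have h0 : ‖(z - ζ).1‖ ≤ eNorm (z - ζ) :=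
      Real.le_sqrt_of_sq_le (by have := sq_nonneg ‖(z - ζ).2‖; linarith)
    have h1 := Complex.abs_re_le_norm (z - ζ).1
    have h2 := Complex.abs_im_le_norm (z - ζ).1
    simp only [Prod.fst_sub, Complex.sub_re, Complex.sub_im] at h0 h1 h2
    linarith
  have hBk : B ^ k ≤ 9 * N ^ k := by
    rcases hk with rfl | rfl
    · linarith
    · nlinarith
  have := mul_le_mul hBk hME hM0 (by positivity)
  linarith
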